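/- arXiv:2001.07622 — 3 statements merged into one kernel-verified Lean document; each statement's English description precedes it below -/
import Mathlib

section
/- Let N, M, d, G be positive integers, H an N×M complex matrix, σ > 0, and g₀ ∈ {1,…,G}. For a family V = (V_1,…,V_G) of M×d complex matrices define X(V) = Σ_{g=1}^G H V_g V_gᴴ Hᴴ + σ² I_N and J(V) = (X(V) − H V_{g₀} V_{g₀}ᴴ Hᴴ)⁻¹. Fix an expansion family V⁰ = (V⁰_1,…,V⁰_G) and set U⁰ = X(V⁰)⁻¹ H V⁰_{g₀}, Q⁰ = I_d − (U⁰)ᴴ H V⁰_{g₀}. Fix reals F, C⁰, η⁰ and define A = Hᴴ U⁰ (Q⁰)⁻¹ (U⁰)ᴴ H, B = −(Q⁰)⁻¹ (U⁰)ᴴ H, b = Re Tr((Q⁰)⁻¹ (I_d + σ² (U⁰)ᴴ U⁰)) + log((det Q⁰).re) + (η⁰ + C⁰)²/2 − d, and the surrogate f(C, η, V) = Σ_{g=1}^G Re Tr(V_gᴴ A V_g) + 2 Re Tr(B V_{g₀}) + (η² + C²)/2 + F η − (η⁰ + C⁰)(η + C) + b. Then for all reals C, η and every family V of M×d complex matrices,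 f(C, η, V) ≥ (F − C) η − log((det(I_N + H V_{g₀} V_{g₀}ᴴ Hᴴ J(V))).re). -/
open Matrix BigOperators

/-- The interference-plus-signal covariance `X(V) = ∑ g, H V_g V_gᴴ Hᴴ + σ² I_N`. -/
noncomputable def Xmat {N M d G : ℕ} (H : Matrix (Fin N) (Fin M) ℂ) (σ : ℝ)
    (V : Fin G → Matrix (Fin M) (Fin d) ℂ) : Matrix (Fin N) (Fin N) ℂ :=
  (∑ g, H * V g * (V g)ᴴ * Hᴴ) + ((σ : ℂ) ^ 2) • (1 : Matrix (Fin N) (Fin N) ℂ)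

/-- `J(V) = (X(V) − H V_{g₀} V_{g₀}ᴴ Hᴴ)⁻¹`, the inverse interference-plus-noise covariance. -/
noncomputable def Jmat {N M d G : ℕ} (H : Matrix (Fin N) (Fin M) ℂ) (σ : ℝ) (g₀ : Fin G)
    (V : Fin G → Matrix (Fin M) (Fin d) ℂ) : Matrix (Fin N) (Fin N) ℂ :=
  (Xmat H σ V - H * V g₀ * (V g₀)ᴴ * Hᴴ)⁻¹

open scoped ComplexOrder MatrixOrder Matrix.Norms.L2Operator in
theorem aux_fac {d : ℕ} (P : Matrix (Fin d) (Fin d) ℂ) (hP : P.PosSemidef) :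
    ∃ B : Matrix (Fin d) (Fin d) ℂ, P = Bᴴ * B :=
  CStarAlgebra.nonneg_iff_eq_star_mul_self.mp hP.nonneg

open scoped ComplexOrder in
theorem aux_log {d : ℕ} (P S : Matrix (Fin d) (Fin d) ℂ) (hP : P.PosDef) (hS : S.PosDef) :
    (d : ℝ) + Real.log P.det.re + Real.log S.det.re ≤ ((P * S).trace).re := by
  obtain ⟨B, hBu, hB⟩ : ∃ B : Matrix (Fin d) (Fin d) ℂ, IsUnit B ∧ P = Bᴴ * B := by
    obtain ⟨B, hB⟩ := aux_fac _ hP.posSemidef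
    refine ⟨B, ?_, hB⟩
    rw [Matrix.isUnit_iff_isUnit_det]
    have h := hP.det_pos.ne'
    rw [hB, det_mul] at h
    exact isUnit_iff_ne_zero.mpr (right_ne_zero_of_mul h)
  have hY : (B * S * Bᴴ).PosDef :=
    (Matrix.IsUnit.posDef_star_right_conjugate_iff hBu).mpr hS
  have ht : (P * S).trace = (B * S * Bᴴ).trace := by
    rw [hB, Matrix.mul_assoc, trace_mul_comm]
  have hd : P.det * S.det = (B * S * Bᴴ).det := by
    rw [hB]; simp only [det_mul]; ring
  have h1 := hP.det_pos
  have h2 := hS.det_pos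
  rw [Complex.pos_iff] at h1 h2
  have hre : P.det.re * S.det.re = (B * S * Bᴴ).det.re := by
    rw [← hd, Complex.mul_re, ← h1.2]; ring
  rw [add_assoc, ← Real.log_mul h1.1.ne' h2.1.ne', hre, ht,
    hY.isHermitian.det_eq_prod_eigenvalues, hY.isHermitian.trace_eq_sum_eigenvalues]
  have e1 : (∏ i, ((hY.isHermitian.eigenvalues i : ℝ) : ℂ)).re
      = ∏ i, hY.isHermitian.eigenvalues i := by
    rw [← Complex.ofReal_prod, Complex.ofReal_re]
  have e2 : (∑ i, ((hY.isHermitian.eigenvalues i : ℝ) : ℂ)).re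
      = ∑ i, hY.isHermitian.eigenvalues i := by
    rw [← Complex.ofReal_sum, Complex.ofReal_re]
  erw [e1, e2]
  rw [Real.log_prod (fun i _ => (hY.eigenvalues_pos i).ne')]
  have : (d : ℝ) = ∑ i : Fin d, (1 : ℝ) := by simp
  rw [this, ← Finset.sum_add_distrib]
  apply Finset.sum_le_sum
  intro i _
  linarith [Real.log_le_sub_one_of_pos (hY.eigenvalues_pos i)]

open scoped ComplexOrder in
theorem aux_S {N d : ℕ} (R : Matrix (Fin N) (Fin N) ℂ) (hR : R.PosDef)
    (W : Matrix (Fin N) (Fin d) ℂ) :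
    (1 - Wᴴ * (R + W * Wᴴ)⁻¹ * W).PosDef ∧
    Real.log ((1 + W * Wᴴ * R⁻¹).det.re) = - Real.log ((1 - Wᴴ * (R + W * Wᴴ)⁻¹ * W).det.re) := by
  have hX : (R + W * Wᴴ).PosDef := hR.add_posSemidef (posSemidef_self_mul_conjTranspose W)
  have hXi := Matrix.nonsing_inv_mul _ ((Matrix.isUnit_iff_isUnit_det _).mp hX.isUnit)
  have hRi := Matrix.mul_nonsing_inv _ ((Matrix.isUnit_iff_isUnit_det _).mp hR.isUnit)
  have hT : (1 + Wᴴ * R⁻¹ * W).PosDef :=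
    PosDef.one.add_posSemidef (hR.inv.posSemidef.conjTranspose_mul_mul_same W)
  set K := (R + W * Wᴴ)⁻¹ with hK
  have hKey : K * (W * Wᴴ) * R⁻¹ = R⁻¹ - K := by
    have : K * (W * Wᴴ) = 1 - K * R := by rw [← hXi]; noncomm_ring
    rw [this, Matrix.sub_mul, Matrix.mul_assoc, hRi, Matrix.one_mul, Matrix.mul_one]
  have hprod : (1 - Wᴴ * K * W) * (1 + Wᴴ * R⁻¹ * W) = 1 := by
    have : Wᴴ * K * W * (Wᴴ * R⁻¹ * W) = Wᴴ * (K * (W * Wᴴ) * R⁻¹) * W := by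
      simp only [Matrix.mul_assoc]
    rw [Matrix.sub_mul, Matrix.one_mul, Matrix.mul_add, Matrix.mul_one, this, hKey,
      Matrix.mul_sub, Matrix.sub_mul]
    abel
  have hS : (1 - Wᴴ * K * W) = (1 + Wᴴ * R⁻¹ * W)⁻¹ := (Matrix.inv_eq_left_inv hprod).symm
  have hSp : (1 - Wᴴ * K * W).PosDef := by rw [hS]; exact hT.inv
  refine ⟨hSp, ?_⟩
  have hdet : (1 + W * Wᴴ * R⁻¹).det = (1 + Wᴴ * R⁻¹ * W).det := by
    rw [Matrix.mul_assoc, det_one_add_mul_comm]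
  have h1 := hSp.det_pos
  have h2 := hT.det_pos
  have h3 := congrArg Matrix.det hprod
  rw [det_mul, det_one] at h3
  rw [Complex.pos_iff] at h1 h2
  have h4 := congrArg Complex.re h3
  rw [Complex.mul_re, ← h1.2, Complex.one_re, zero_mul, sub_zero] at h4
  rw [hdet]
  have h5 := Real.log_mul h1.1.ne' h2.1.ne'
  rw [h4, Real.log_one] at h5
  linarith

open scoped ComplexOrder in
theorem aux_core {N d : ℕ} (R : Matrix (Fin N) (Fin N) ℂ) (hR : R.PosDef)
    (W U : Matrix (Fin N) (Fin d) ℂ) (Q : Matrix (Fin d) (Fin d) ℂ) (hQ : Q.PosDef) :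
    - Real.log ((1 + W * Wᴴ * R⁻¹).det.re) ≤
      ((Q⁻¹ * (1 + Uᴴ * (R + W * Wᴴ) * U)).trace).re - 2 * ((Q⁻¹ * Uᴴ * W).trace).re
        + Real.log Q.det.re - d := by
  obtain ⟨hS, hlog⟩ := aux_S R hR W
  have hX : (R + W * Wᴴ).PosDef := hR.add_posSemidef (posSemidef_self_mul_conjTranspose W)
  have hu := (Matrix.isUnit_iff_isUnit_det _).mp hX.isUnit
  rw [hlog, neg_neg]
  set X := R + W * Wᴴ with hXd
  have hXh : (X⁻¹)ᴴ = X⁻¹ := hX.inv.isHermitian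
  have hXX : Xᴴ = X := hX.isHermitian
  set S := 1 - Wᴴ * X⁻¹ * W with hSd
  have h1 := aux_log Q⁻¹ S hQ.inv hS
  have hqp := hQ.det_pos
  rw [Complex.pos_iff] at hqp
  have hq : Real.log Q⁻¹.det.re = - Real.log Q.det.re := by
    have e : Q.det = ((Q.det.re : ℝ) : ℂ) := by
      apply Complex.ext <;> simp [← hqp.2]
    rw [Matrix.det_nonsing_inv, Ring.inverse_eq_inv', e, ← Complex.ofReal_inv, Complex.ofReal_re,
      Complex.ofReal_re, Real.log_inv]
  rw [hq] at h1
  have hE : 1 + Uᴴ * X * U - Uᴴ * W - Wᴴ * U = S + (U - X⁻¹ * W)ᴴ * X * (U - X⁻¹ * W) := by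
    have a1 : Wᴴ * X⁻¹ * X = Wᴴ := by rw [Matrix.mul_assoc, Matrix.nonsing_inv_mul _ hu, Matrix.mul_one]
    have a2 : Uᴴ * X * (X⁻¹ * W) = Uᴴ * W := by
      rw [Matrix.mul_assoc, ← Matrix.mul_assoc X, Matrix.mul_nonsing_inv _ hu, Matrix.one_mul]
    rw [conjTranspose_sub, conjTranspose_mul, hXh, Matrix.sub_mul, a1, Matrix.mul_sub,
      Matrix.sub_mul, Matrix.sub_mul, a2, hSd, Matrix.mul_assoc Wᴴ]
    abel
  have hpsd : 0 ≤ ((Q⁻¹ * ((U - X⁻¹ * W)ᴴ * X * (U - X⁻¹ * W))).trace).re := by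
    obtain ⟨B, hB⟩ := aux_fac _ hQ.inv.posSemidef
    have hp := (hX.posSemidef.conjTranspose_mul_mul_same (U - X⁻¹ * W)).mul_mul_conjTranspose_same B
    have := hp.trace_nonneg
    rw [hB, Matrix.mul_assoc, trace_mul_comm]
    exact (Complex.nonneg_iff.mp this).1
  have hconj : ((Q⁻¹ * (Wᴴ * U)).trace).re = ((Q⁻¹ * Uᴴ * W).trace).re := by
    have : (Q⁻¹ * Uᴴ * W)ᴴ = (Wᴴ * U) * Q⁻¹ := by
      have hq' : (Q⁻¹)ᴴ = Q⁻¹ := hQ.inv.isHermitian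
      simp only [conjTranspose_mul, conjTranspose_conjTranspose, hq', Matrix.mul_assoc]
    have h := trace_conjTranspose (Q⁻¹ * Uᴴ * W)
    rw [this, trace_mul_comm] at h
    rw [h]; simp
  generalize (U - X⁻¹ * W)ᴴ * X * (U - X⁻¹ * W) = D at hE hpsd
  have h2 := congrArg (fun Z => ((Q⁻¹ * Z).trace).re) hE
  simp only [Matrix.mul_sub, Matrix.mul_add, trace_sub, trace_add, Complex.sub_re,
    Complex.add_re, hconj] at h2
  simp only [Matrix.mul_add, trace_add, Complex.add_re] at *
  simp only [← Matrix.mul_assoc] at *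
  linarith

open scoped ComplexOrder in
theorem aux_X {N M d G : ℕ} (H : Matrix (Fin N) (Fin M) ℂ) (σ : ℝ) (hσ : 0 < σ) (g₀ : Fin G)
    (V : Fin G → Matrix (Fin M) (Fin d) ℂ) :
    ∃ R : Matrix (Fin N) (Fin N) ℂ, R.PosDef ∧ Xmat H σ V = R + (H * V g₀) * (H * V g₀)ᴴ := by
  refine ⟨(∑ g ∈ Finset.univ.erase g₀, (H * V g) * (H * V g)ᴴ) + ((σ : ℂ) ^ 2) • 1, ?_, ?_⟩
  · apply PosDef.posSemidef_add
    · exact posSemidef_sum _ (fun g _ => posSemidef_self_mul_conjTranspose _)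
    · apply PosDef.smul PosDef.one
      exact_mod_cast pow_pos hσ 2
  · unfold Xmat
    rw [← Finset.sum_erase_add _ _ (Finset.mem_univ g₀)]
    simp only [conjTranspose_mul, Matrix.mul_assoc]
    abel

open scoped ComplexOrder in
/-- Property (1.1) of Proposition 1: the quadratic surrogate `f` upper bounds
`(F − C) η − log det(I + H V_{g₀} V_{g₀}ᴴ Hᴴ J(V))`. -/
theorem stmt0 (N M d G : ℕ) (hN : 0 < N) (hM : 0 < M) (hd : 0 < d) (hG : 0 < G)
    (H : Matrix (Fin N) (Fin M) ℂ) (σ : ℝ) (hσ : 0 < σ) (g₀ : Fin G)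
    (V0 : Fin G → Matrix (Fin M) (Fin d) ℂ) (F C0 η0 : ℝ)
    (U0 : Matrix (Fin N) (Fin d) ℂ) (hU0 : U0 = (Xmat H σ V0)⁻¹ * (H * V0 g₀))
    (Q0 : Matrix (Fin d) (Fin d) ℂ) (hQ0 : Q0 = 1 - U0ᴴ * (H * V0 g₀))
    (A : Matrix (Fin M) (Fin M) ℂ) (hA : A = Hᴴ * U0 * Q0⁻¹ * U0ᴴ * H)
    (B : Matrix (Fin d) (Fin M) ℂ) (hB : B = -(Q0⁻¹ * U0ᴴ * H))
    (b : ℝ)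
    (hb : b = ((Q0⁻¹ * (1 + ((σ : ℂ) ^ 2) • (U0ᴴ * U0))).trace).re
      + Real.log (Q0.det.re) + (η0 + C0) ^ 2 / 2 - d)
    (f : ℝ → ℝ → (Fin G → Matrix (Fin M) (Fin d) ℂ) → ℝ)
    (hf : ∀ C η V, f C η V = (∑ g, (((V g)ᴴ * A * V g).trace).re)
      + 2 * ((B * V g₀).trace).re + (η ^ 2 + C ^ 2) / 2 + F * η
      - (η0 + C0) * (η + C) + b) :
    ∀ (C η : ℝ) (V : Fin G → Matrix (Fin M) (Fin d) ℂ),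
      f C η V ≥ (F - C) * η
        - Real.log ((((1 : Matrix (Fin N) (Fin N) ℂ)
            + H * V g₀ * (V g₀)ᴴ * Hᴴ * Jmat H σ g₀ V).det).re) := by
  intro C η V
  obtain ⟨R0, hR0, hX0⟩ := aux_X H σ hσ g₀ V0
  obtain ⟨R, hR, hX⟩ := aux_X H σ hσ g₀ V
  have hWW : H * V g₀ * (V g₀)ᴴ * Hᴴ = (H * V g₀) * (H * V g₀)ᴴ := by
    simp only [conjTranspose_mul, Matrix.mul_assoc]
  have hJ : Jmat H σ g₀ V = R⁻¹ := by
    unfold Jmat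
    rw [hX, hWW, add_sub_cancel_right]
  have hQ : Q0.PosDef := by
    have h := (aux_S R0 hR0 (H * V0 g₀)).1
    have hp : (R0 + (H * V0 g₀) * (H * V0 g₀)ᴴ).PosDef :=
      hR0.add_posSemidef (posSemidef_self_mul_conjTranspose _)
    have hh : ((R0 + (H * V0 g₀) * (H * V0 g₀)ᴴ)⁻¹)ᴴ = _ := hp.inv.isHermitian
    rw [hQ0, hU0, hX0, conjTranspose_mul, hh]
    exact h
  have hc := aux_core R hR (H * V g₀) U0 Q0 hQ
  rw [hf, hb, hJ, hWW]
  have hsum : (∑ g, (((V g)ᴴ * A * V g).trace).re)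
      + ((Q0⁻¹ * (1 + ((σ : ℂ) ^ 2) • (U0ᴴ * U0))).trace).re
      = ((Q0⁻¹ * (1 + U0ᴴ * (R + (H * V g₀) * (H * V g₀)ᴴ) * U0)).trace).re := by
    have ht : ∀ g, ((V g)ᴴ * A * V g).trace
        = (Q0⁻¹ * (U0ᴴ * (H * V g * (V g)ᴴ * Hᴴ) * U0)).trace := by
      intro g
      have e1 : (V g)ᴴ * A * V g = ((V g)ᴴ * Hᴴ * U0) * (Q0⁻¹ * U0ᴴ * H * V g) := by
        rw [hA]; simp only [Matrix.mul_assoc]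
      rw [e1, trace_mul_comm]
      simp only [Matrix.mul_assoc]
    rw [← hX]
    unfold Xmat
    rw [← Complex.re_sum, ← Complex.add_re]
    congr 1
    simp only [ht, Matrix.mul_add, Matrix.add_mul, Matrix.mul_sum, Matrix.sum_mul, trace_add,
      trace_sum, Matrix.mul_smul, Matrix.smul_mul, Matrix.mul_one]
    ring
  have hBt : ((B * V g₀).trace).re = - ((Q0⁻¹ * U0ᴴ * (H * V g₀)).trace).re := by
    rw [hB, Matrix.neg_mul, trace_neg, Complex.neg_re, Matrix.mul_assoc _ H]
  rw [hBt]
  nlinarith [sq_nonneg (η + C - (η0 + C0))]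
end

section
/- Let N, M, d, G be positive integers, H an N×M complex matrix, σ > 0, and g₀ ∈ {1,…,G}. For a family V = (V_1,…,V_G) of M×d complex matrices define X(V) = Σ_{g=1}^G H V_g V_gᴴ Hᴴ + σ² I_N and J(V) = (X(V) − H V_{g₀} V_{g₀}ᴴ Hᴴ)⁻¹. Fix an expansion family V⁰ = (V⁰_1,…,V⁰_G) and set U⁰ = X(V⁰)⁻¹ H V⁰_{g₀}, Q⁰ = I_d − (U⁰)ᴴ H V⁰_{g₀}. Fix reals F, C⁰, η⁰ and define A = Hᴴ U⁰ (Q⁰)⁻¹ (U⁰)ᴴ H, B = −(Q⁰)⁻¹ (U⁰)ᴴ H, b = Re Tr((Q⁰)⁻¹ (I_d + σ² (U⁰)ᴴ U⁰)) + log((det Q⁰).re) + (η⁰ + C⁰)²/2 − d, and the surrogate f(C, η, V) = Σ_{g=1}^G Re Tr(V_gᴴ A V_g) + 2 Re Tr(B V_{g₀}) + (η² + C²)/2 + F η − (η⁰ + C⁰)(η + C) + b. Then equality holds at the expansion point: f(C⁰, η⁰, V⁰) = (F − C⁰) η⁰ − log((det(I_N + H V⁰_{g₀} (V⁰_{g₀})ᴴ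 Hᴴ J(V⁰))).re). -/
open Matrix BigOperators

open scoped ComplexOrder

lemma aux_posDef {N M d G : ℕ} (H : Matrix (Fin N) (Fin M) ℂ) (σ : ℝ) (hσ : 0 < σ)
    (V : Fin G → Matrix (Fin M) (Fin d) ℂ) (s : Finset (Fin G)) :
    ((∑ g ∈ s, H * V g * (V g)ᴴ * Hᴴ) + ((σ : ℂ) ^ 2) • (1 : Matrix (Fin N) (Fin N) ℂ)).PosDef := by
  have h1 : (∑ g ∈ s, H * V g * (V g)ᴴ * Hᴴ).PosSemidef := by
    refine Matrix.posSemidef_sum s (fun g _ => ?_)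
    have := Matrix.posSemidef_self_mul_conjTranspose (H * V g)
    rwa [Matrix.conjTranspose_mul, ← Matrix.mul_assoc] at this
  have h2 : (((σ : ℂ) ^ 2) • (1 : Matrix (Fin N) (Fin N) ℂ)).PosDef := by
    refine Matrix.PosDef.smul Matrix.PosDef.one ?_
    have : (0 : ℝ) < σ ^ 2 := by positivity
    exact_mod_cast this
  exact Matrix.PosDef.posSemidef_add h1 h2

/-- Equality case of property (1.1) of Proposition 1: the surrogate `f` is tight at the
expansion point `(C⁰, η⁰, V⁰)`. -/
theorem stmt1 (N M d G : ℕ) (hN : 0 < N) (hM : 0 < M) (hd : 0 < d) (hG : 0 < G)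
    (H : Matrix (Fin N) (Fin M) ℂ) (σ : ℝ) (hσ : 0 < σ) (g₀ : Fin G)
    (V0 : Fin G → Matrix (Fin M) (Fin d) ℂ) (F C0 η0 : ℝ)
    (U0 : Matrix (Fin N) (Fin d) ℂ) (hU0 : U0 = (Xmat H σ V0)⁻¹ * (H * V0 g₀))
    (Q0 : Matrix (Fin d) (Fin d) ℂ) (hQ0 : Q0 = 1 - U0ᴴ * (H * V0 g₀))
    (A : Matrix (Fin M) (Fin M) ℂ) (hA : A = Hᴴ * U0 * Q0⁻¹ * U0ᴴ * H)
    (B : Matrix (Fin d) (Fin M) ℂ) (hB : B = -(Q0⁻¹ * U0ᴴ * H))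
    (b : ℝ)
    (hb : b = ((Q0⁻¹ * (1 + ((σ : ℂ) ^ 2) • (U0ᴴ * U0))).trace).re
      + Real.log (Q0.det.re) + (η0 + C0) ^ 2 / 2 - d)
    (f : ℝ → ℝ → (Fin G → Matrix (Fin M) (Fin d) ℂ) → ℝ)
    (hf : ∀ C η V, f C η V = (∑ g, (((V g)ᴴ * A * V g).trace).re)
      + 2 * ((B * V g₀).trace).re + (η ^ 2 + C ^ 2) / 2 + F * η
      - (η0 + C0) * (η + C) + b) :
    f C0 η0 V0 = (F - C0) * η0
      - Real.log ((((1 : Matrix (Fin N) (Fin N) ℂ)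
          + H * V0 g₀ * (V0 g₀)ᴴ * Hᴴ * Jmat H σ g₀ V0).det).re) := by
  -- setup
  set W := H * V0 g₀ with hW
  have hWW : H * V0 g₀ * (V0 g₀)ᴴ * Hᴴ = W * Wᴴ := by
    rw [hW, Matrix.conjTranspose_mul, ← Matrix.mul_assoc]
  have hX : (Xmat H σ V0).PosDef := aux_posDef H σ hσ V0 Finset.univ
  have hY : (Xmat H σ V0 - W * Wᴴ).PosDef := by
    have h := aux_posDef H σ hσ V0 (Finset.univ.erase g₀)
    have e : Xmat H σ V0 - W * Wᴴ = (∑ g ∈ Finset.univ.erase g₀, H * V0 g * (V0 g)ᴴ * Hᴴ)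
        + ((σ : ℂ) ^ 2) • (1 : Matrix (Fin N) (Fin N) ℂ) := by
      rw [Xmat, ← Finset.add_sum_erase _ _ (Finset.mem_univ g₀), hWW]
      abel
    rw [e]; exact h
  have hXeq : Xmat H σ V0 = (∑ g, H * V0 g * (V0 g)ᴴ * Hᴴ)
      + ((σ : ℂ) ^ 2) • (1 : Matrix (Fin N) (Fin N) ℂ) := rfl
  rw [← hW] at hWW
  rw [hWW, Jmat, ← hW, hWW]
  clear_value W
  generalize Xmat H σ V0 = X at *
  have hXu : IsUnit X.det := isUnit_iff_ne_zero.mpr hX.det_pos.ne'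
  have hYu : IsUnit (X - W * Wᴴ).det := isUnit_iff_ne_zero.mpr hY.det_pos.ne'
  have hUH : U0ᴴ = Wᴴ * X⁻¹ := by
    rw [hU0, Matrix.conjTranspose_mul, Matrix.conjTranspose_nonsing_inv, hX.isHermitian.eq]
  have hdQ : Q0.det * X.det = (X - W * Wᴴ).det := by
    rw [hQ0, hUH, Matrix.mul_assoc, Matrix.det_one_sub_mul_comm, mul_comm, ← Matrix.det_mul,
      Matrix.mul_sub, Matrix.mul_one, Matrix.mul_assoc X⁻¹, ← Matrix.mul_assoc X,
      Matrix.mul_nonsing_inv _ hXu, Matrix.one_mul]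
  have hdP : (1 + W * Wᴴ * (X - W * Wᴴ)⁻¹).det * (X - W * Wᴴ).det = X.det := by
    rw [← Matrix.det_mul, Matrix.add_mul, Matrix.one_mul, Matrix.mul_assoc,
      Matrix.nonsing_inv_mul _ hYu, Matrix.mul_one, sub_add_cancel]
  obtain ⟨x, hx, hxe⟩ : ∃ x : ℝ, 0 < x ∧ X.det = x := by
    have := Complex.pos_iff.mp hX.det_pos
    exact ⟨X.det.re, this.1, Complex.ext rfl (by simpa using this.2.symm)⟩
  obtain ⟨y, hy, hye⟩ : ∃ x : ℝ, 0 < x ∧ (X - W * Wᴴ).det = x := by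
    have := Complex.pos_iff.mp hY.det_pos
    exact ⟨(X - W * Wᴴ).det.re, this.1, Complex.ext rfl (by simpa using this.2.symm)⟩
  have hxc : (x : ℂ) ≠ 0 := by exact_mod_cast hx.ne'
  have hyc : (y : ℂ) ≠ 0 := by exact_mod_cast hy.ne'
  rw [hxe, hye] at hdQ hdP
  have hq : Q0.det = ((y / x : ℝ) : ℂ) := by
    push_cast; rw [eq_div_iff hxc, hdQ]
  have hp : (1 + W * Wᴴ * (X - W * Wᴴ)⁻¹).det = ((x / y : ℝ) : ℂ) := by
    push_cast; rw [eq_div_iff hyc, hdP]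
  have hQu : IsUnit Q0.det := by
    rw [hq]; exact isUnit_iff_ne_zero.mpr (by exact_mod_cast (div_pos hy hx).ne')
  have hXU : X * U0 = W := by
    rw [hU0, ← Matrix.mul_assoc, Matrix.mul_nonsing_inv _ hXu, Matrix.one_mul]
  have hsum : (∑ g, ((V0 g)ᴴ * A * V0 g).trace)
      + ((σ : ℂ) ^ 2) * (Q0⁻¹ * (U0ᴴ * U0)).trace = (Q0⁻¹ * (U0ᴴ * W)).trace := by
    have h1 : ∀ g, ((V0 g)ᴴ * A * V0 g).trace
        = (Q0⁻¹ * U0ᴴ * (H * V0 g * (V0 g)ᴴ * Hᴴ) * U0).trace := by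
      intro g
      rw [hA]
      have := Matrix.trace_mul_comm ((V0 g)ᴴ * Hᴴ * U0) (Q0⁻¹ * U0ᴴ * H * V0 g)
      simpa only [Matrix.mul_assoc] using this
    rw [← hXU]
    conv_rhs => rw [hXeq]
    simp only [h1]
    rw [← Matrix.trace_sum, ← Matrix.sum_mul, ← Matrix.mul_sum, Matrix.add_mul, Matrix.mul_add,
      Matrix.mul_add, Matrix.trace_add]
    simp [Matrix.mul_assoc]
  have hd1 : (Q0⁻¹).trace - (Q0⁻¹ * (U0ᴴ * W)).trace = d := by
    have : (Q0⁻¹ * Q0).trace = d := by rw [Matrix.nonsing_inv_mul _ hQu]; simp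
    conv_lhs at this => arg 1; arg 2; rw [hQ0]
    rwa [Matrix.mul_sub, Matrix.mul_one, Matrix.trace_sub] at this
  have hBt : (B * V0 g₀).trace = -(Q0⁻¹ * (U0ᴴ * W)).trace := by
    rw [hB, hW]; simp [Matrix.mul_assoc]
  have hbt : (Q0⁻¹ * (1 + ((σ : ℂ) ^ 2) • (U0ᴴ * U0))).trace
      = (Q0⁻¹).trace + ((σ : ℂ) ^ 2) * (Q0⁻¹ * (U0ᴴ * U0)).trace := by
    simp [Matrix.mul_add]
  rw [hf, hb, hbt, hBt, hp, hq, Complex.ofReal_re, Complex.ofReal_re,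
    Real.log_div hy.ne' hx.ne', Real.log_div hx.ne' hy.ne']
  have r1 := congrArg Complex.re hsum
  have r2 := congrArg Complex.re hd1
  simp only [Complex.add_re, Complex.sub_re, Complex.neg_re, Complex.re_sum, Complex.natCast_re]
    at r1 r2 ⊢
  linarith
end

section
/- Let N, M, d, G be positive integers, H an N×M complex matrix, σ > 0, and g₀ ∈ {1,…,G}. For a family V = (V_1,…,V_G) of M×d complex matrices define X(V) = Σ_{g=1}^G H V_g V_gᴴ Hᴴ + σ² I_N and J(V) = (X(V) − H V_{g₀} V_{g₀}ᴴ Hᴴ)⁻¹. Fix an expansion family V⁰ = (V⁰_1,…,V⁰_G) and set U⁰ = X(V⁰)⁻¹ H V⁰_{g₀}, Q⁰ = I_d − (U⁰)ᴴ H V⁰_{g₀}, Â = Hᴴ U⁰ (Q⁰)⁻¹ (U⁰)ᴴ H, B̂ = −(Q⁰)⁻¹ (U⁰)ᴴ H, b̂ = Re Tr((Q⁰)⁻¹ (I_d + σ² (U⁰)ᴴ U⁰)) + log((det Q⁰).re) − d, and h(V) = Σ_{g=1}^G Re Tr(V_gᴴ Â V_g) + 2 Re Tr(B̂ V_{g₀})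 + b̂. Then equality holds at the expansion point: h(V⁰) = − log((det(I_N + H V⁰_{g₀} (V⁰_{g₀})ᴴ Hᴴ J(V⁰))).re). -/
open Matrix BigOperators

open scoped ComplexOrder

/-- Equality case of property C.a of Appendix C: the majorizer `h` is tight at the
expansion point `V⁰`. -/
theorem stmt3 (N M d G : ℕ) (hN : 0 < N) (hM : 0 < M) (hd : 0 < d) (hG : 0 < G)
    (H : Matrix (Fin N) (Fin M) ℂ) (σ : ℝ) (hσ : 0 < σ) (g₀ : Fin G)
    (V0 : Fin G → Matrix (Fin M) (Fin d) ℂ)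
    (U0 : Matrix (Fin N) (Fin d) ℂ) (hU0 : U0 = (Xmat H σ V0)⁻¹ * (H * V0 g₀))
    (Q0 : Matrix (Fin d) (Fin d) ℂ) (hQ0 : Q0 = 1 - U0ᴴ * (H * V0 g₀))
    (A : Matrix (Fin M) (Fin M) ℂ) (hA : A = Hᴴ * U0 * Q0⁻¹ * U0ᴴ * H)
    (B : Matrix (Fin d) (Fin M) ℂ) (hB : B = -(Q0⁻¹ * U0ᴴ * H))
    (b : ℝ)
    (hb : b = ((Q0⁻¹ * (1 + ((σ : ℂ) ^ 2) • (U0ᴴ * U0))).trace).re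
      + Real.log (Q0.det.re) - d)
    (h : (Fin G → Matrix (Fin M) (Fin d) ℂ) → ℝ)
    (hh : ∀ V, h V = (∑ g, (((V g)ᴴ * A * V g).trace).re)
      + 2 * ((B * V g₀).trace).re + b) :
    h V0 = - Real.log ((((1 : Matrix (Fin N) (Fin N) ℂ)
        + H * V0 g₀ * (V0 g₀)ᴴ * Hᴴ * Jmat H σ g₀ V0).det).re) := by
  classical
  have hXdef : Xmat H σ V0 = (∑ g, H * V0 g * (V0 g)ᴴ * Hᴴ)
      + ((σ : ℂ) ^ 2) • (1 : Matrix (Fin N) (Fin N) ℂ) := rfl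
  have hJ : Jmat H σ g₀ V0 = (Xmat H σ V0 - H * V0 g₀ * (V0 g₀)ᴴ * Hᴴ)⁻¹ := rfl
  have hσ2 : (0 : ℂ) < (σ : ℂ) ^ 2 := by
    have : (0 : ℝ) < σ ^ 2 := by positivity
    exact_mod_cast this
  have hone : (((σ : ℂ) ^ 2) • (1 : Matrix (Fin N) (Fin N) ℂ)).PosDef :=
    Matrix.PosDef.one.smul hσ2
  have hterm : ∀ g, (H * V0 g * (V0 g)ᴴ * Hᴴ).PosSemidef := by
    intro g
    have := Matrix.posSemidef_self_mul_conjTranspose (H * V0 g)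
    rwa [Matrix.conjTranspose_mul, ← Matrix.mul_assoc] at this
  have hX : (Xmat H σ V0).PosDef := by
    rw [hXdef]
    exact Matrix.PosDef.posSemidef_add (Matrix.posSemidef_sum _ fun g _ => hterm g) hone
  have hK : (Xmat H σ V0 - H * V0 g₀ * (V0 g₀)ᴴ * Hᴴ).PosDef := by
    have : Xmat H σ V0 - H * V0 g₀ * (V0 g₀)ᴴ * Hᴴ
        = (∑ g ∈ Finset.univ.erase g₀, H * V0 g * (V0 g)ᴴ * Hᴴ)
          + ((σ : ℂ) ^ 2) • (1 : Matrix (Fin N) (Fin N) ℂ) := by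
      rw [hXdef, ← Finset.add_sum_erase _ _ (Finset.mem_univ g₀)]
      abel
    rw [this]
    exact Matrix.PosDef.posSemidef_add (Matrix.posSemidef_sum _ fun g _ => hterm g) hone
  rw [hJ]
  have hWW : H * V0 g₀ * (V0 g₀)ᴴ * Hᴴ = (H * V0 g₀) * (H * V0 g₀)ᴴ := by
    rw [Matrix.conjTranspose_mul, ← Matrix.mul_assoc]
  rw [hWW] at hK ⊢
  have hsum : ∑ g, (H * V0 g) * (H * V0 g)ᴴ
      = Xmat H σ V0 - ((σ : ℂ) ^ 2) • (1 : Matrix (Fin N) (Fin N) ℂ) := by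
    rw [hXdef]
    simp only [Matrix.conjTranspose_mul, ← Matrix.mul_assoc, add_sub_cancel_right]
  have hBV : B * V0 g₀ = -(Q0⁻¹ * (U0ᴴ * (H * V0 g₀))) := by
    rw [hB]; simp only [Matrix.neg_mul, Matrix.mul_assoc]
  have hAV : ∀ g, ((V0 g)ᴴ * A * V0 g).trace
      = (Q0⁻¹ * U0ᴴ * ((H * V0 g) * (H * V0 g)ᴴ) * U0).trace := by
    intro g
    have e1 : (V0 g)ᴴ * A * V0 g = ((H * V0 g)ᴴ * U0) * (Q0⁻¹ * U0ᴴ * (H * V0 g)) := by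
      rw [hA, Matrix.conjTranspose_mul]; simp only [Matrix.mul_assoc]
    rw [e1, Matrix.trace_mul_comm]; simp only [Matrix.mul_assoc]
  rw [hh V0, hb, hBV]
  simp only [hAV]
  generalize Xmat H σ V0 = X at *
  generalize H * V0 g₀ = W at *
  have hXu : IsUnit X.det := (Matrix.isUnit_iff_isUnit_det _).mp hX.isUnit
  have hKu : IsUnit (X - W * Wᴴ).det := (Matrix.isUnit_iff_isUnit_det _).mp hK.isUnit
  have hUH : U0ᴴ = Wᴴ * X⁻¹ := by
    rw [hU0, Matrix.conjTranspose_mul, Matrix.conjTranspose_nonsing_inv, hX.isHermitian.eq]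
  have hXU : X * U0 = W := by
    rw [hU0, Matrix.mul_nonsing_inv_cancel_left _ _ hXu]
  -- determinants
  have hd1 : ((1 : Matrix (Fin N) (Fin N) ℂ) + W * Wᴴ * (X - W * Wᴴ)⁻¹).det
      = X.det * (X - W * Wᴴ).det⁻¹ := by
    have : (1 : Matrix (Fin N) (Fin N) ℂ) + W * Wᴴ * (X - W * Wᴴ)⁻¹
        = X * (X - W * Wᴴ)⁻¹ := by
      conv_lhs => rw [← Matrix.mul_nonsing_inv _ hKu]
      rw [← Matrix.add_mul, sub_add_cancel]
    rw [this, Matrix.det_mul, Matrix.det_nonsing_inv, Ring.inverse_eq_inv']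
  have hd2 : Q0.det = X.det⁻¹ * (X - W * Wᴴ).det := by
    rw [hQ0, hUH, Matrix.mul_assoc, Matrix.det_one_sub_mul_comm, Matrix.mul_assoc]
    have : (1 : Matrix (Fin N) (Fin N) ℂ) - X⁻¹ * (W * Wᴴ) = X⁻¹ * (X - W * Wᴴ) := by
      rw [Matrix.mul_sub, Matrix.nonsing_inv_mul _ hXu]
    rw [this, Matrix.det_mul, Matrix.det_nonsing_inv, Ring.inverse_eq_inv']
  have hQu : IsUnit Q0.det := by
    rw [hd2]; exact (hXu.inv).mul hKu
  have hlog : Real.log (Q0.det.re)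
      = - Real.log (((1 : Matrix (Fin N) (Fin N) ℂ) + W * Wᴴ * (X - W * Wᴴ)⁻¹).det.re) := by
    rw [hd1, hd2]
    have hx := hX.det_pos
    have hk := hK.det_pos
    obtain ⟨x, hx'⟩ : ∃ x : ℝ, X.det = (x : ℂ) :=
      ⟨X.det.re, Complex.ext (by simp) (by simpa using (Complex.lt_def.mp hx).2.symm)⟩
    obtain ⟨k, hk'⟩ : ∃ k : ℝ, (X - W * Wᴴ).det = (k : ℂ) :=
      ⟨(X - W * Wᴴ).det.re, Complex.ext (by simp) (by simpa using (Complex.lt_def.mp hk).2.symm)⟩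
    rw [hx', hk', ← Complex.ofReal_inv, ← Complex.ofReal_inv, ← Complex.ofReal_mul,
      ← Complex.ofReal_mul, Complex.ofReal_re, Complex.ofReal_re, ← Real.log_inv]
    congr 1
    rw [mul_inv, inv_inv]
  -- traces
  have hS : ∑ g, (Q0⁻¹ * U0ᴴ * ((H * V0 g) * (H * V0 g)ᴴ) * U0).trace
      = (Q0⁻¹ * (U0ᴴ * W)).trace - (Q0⁻¹ * (((σ : ℂ) ^ 2) • (U0ᴴ * U0))).trace := by
    rw [← Matrix.trace_sum, ← Matrix.sum_mul, ← Matrix.mul_sum, hsum, ← Matrix.trace_sub]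
    congr 1
    rw [Matrix.mul_sub, Matrix.sub_mul, Matrix.mul_assoc _ X, hXU]
    simp only [Matrix.mul_smul, Matrix.smul_mul, Matrix.mul_one, Matrix.mul_assoc]
  have hT : (Q0⁻¹).trace - (Q0⁻¹ * (U0ᴴ * W)).trace = (d : ℂ) := by
    have : Q0⁻¹ - Q0⁻¹ * (U0ᴴ * W) = 1 := by
      have e : Q0⁻¹ * (1 - U0ᴴ * W) = 1 := by
        rw [← hQ0, Matrix.nonsing_inv_mul _ hQu]
      rwa [Matrix.mul_sub, Matrix.mul_one] at e
    rw [← Matrix.trace_sub, this]; simp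
  have hS' := congrArg Complex.re hS
  have hT' := congrArg Complex.re hT
  rw [Complex.re_sum, Complex.sub_re] at hS'
  rw [Complex.sub_re, Complex.natCast_re] at hT'
  rw [hS', ← hlog, Matrix.mul_add, Matrix.mul_one, Matrix.trace_add, Complex.add_re,
    Matrix.trace_neg, Complex.neg_re]
  linarith
end
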